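/- arXiv:2601.22996 — 12 statements merged into one kernel-verified Lean document; each statement's English description precedes it below -/
import Mathlib

section
/- Let s ≥ 0, τ ≥ 1, and M be natural numbers with s + τ ≤ M, and set k₀ := ⌊(2M - τ + 1)/(2s + τ + 1)⌋. Then k₀ ≥ 1 and 2·s·k₀ + τ·k₀ + τ + k₀ - gcd(τ, k₀) ≤ 2M; that is, Peak(k₀, τ, s) ≤ M, so the maximum memory-feasible degree of parallelism k*(τ, s) := max{k ∈ ℕ : Peak(k, τ, s) ≤ M} satisfies k*(τ, s) ≥ ⌊(2M - τ + 1)/(2s + τ + 1)⌋. -/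
/-!
By definition of the floor, `k₀ (2s + τ + 1) ≤ 2M - τ + 1`, and `gcd(τ, k₀) ≥ 1` since `τ ≥ 1`;
adding these two bounds gives feasibility of `k₀`. The quotient is at least `1` because
`s + τ ≤ M` makes the numerator at least the denominator. Finally `gcd(τ, k) ≤ τ` yields
`Peak k τ s ≥ k`, so the feasible set is bounded by `M` and its supremum dominates `k₀`.
-/

/-- `Peak (k, τ, s) = s·k + (τ·k + τ + k − gcd(τ,k))/2`, as a rational number. -/
def Peak (k τ s : ℕ) : ℚ :=
  (s : ℚ) * k + ((τ : ℚ) * k + τ + k - (Nat.gcd τ k : ℚ)) / 2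

/-- The peak memory is at least the degree of parallelism; hence feasible degrees are bounded. -/
lemma le_Peak {τ : ℕ} (hτ : 1 ≤ τ) (k s : ℕ) : (k : ℚ) ≤ Peak k τ s := by
  have hg : ((Nat.gcd τ k : ℕ) : ℚ) ≤ τ := by
    exact_mod_cast Nat.gcd_le_left k hτ
  have hk : (k : ℚ) ≤ (τ : ℚ) * k := by
    exact_mod_cast Nat.le_mul_of_pos_left k hτ
  have hs : (0 : ℚ) ≤ (s : ℚ) * k := by positivity
  unfold Peak
  linarith

/-- Feasible parallelism of SPS: with `τ ≥ 1`, `s + τ ≤ M`, and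
`k₀ = ⌊(2M − τ + 1)/(2s + τ + 1)⌋`, we have `k₀ ≥ 1` and
`2·s·k₀ + τ·k₀ + τ + k₀ − gcd(τ, k₀) ≤ 2M`, i.e. `Peak (k₀, τ, s) ≤ M`; hence the
maximum memory-feasible degree of parallelism `k* = max {k : Peak (k, τ, s) ≤ M}`
satisfies `k* ≥ k₀`. -/
theorem stmt_2 (s τ M : ℕ) (hτ : 1 ≤ τ) (hM : s + τ ≤ M)
    (k₀ : ℕ) (hk₀ : k₀ = (2 * M - τ + 1) / (2 * s + τ + 1)) :
    1 ≤ k₀ ∧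
    2 * s * k₀ + τ * k₀ + τ + k₀ - Nat.gcd τ k₀ ≤ 2 * M ∧
    Peak k₀ τ s ≤ (M : ℚ) ∧
    k₀ ≤ sSup {k : ℕ | Peak k τ s ≤ (M : ℚ)} := by
  have h1 : 1 ≤ k₀ := by
    rw [hk₀, Nat.one_le_div_iff (by omega)]
    omega
  have hfloor : k₀ * (2 * s + τ + 1) ≤ 2 * M - τ + 1 := by
    rw [hk₀]
    exact Nat.div_mul_le_self _ _
  have hg : 1 ≤ Nat.gcd τ k₀ := Nat.gcd_pos_of_pos_left k₀ hτ
  -- The two bounds added, with the subtraction of the gcd cleared.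
  have hsum : 2 * s * k₀ + τ * k₀ + τ + k₀ ≤ 2 * M + Nat.gcd τ k₀ := by
    have hexp : k₀ * (2 * s + τ + 1) = 2 * s * k₀ + τ * k₀ + k₀ := by ring
    omega
  have hpeak : Peak k₀ τ s ≤ (M : ℚ) := by
    have hq : 2 * (s : ℚ) * k₀ + τ * k₀ + τ + k₀ ≤ 2 * M + (Nat.gcd τ k₀ : ℕ) := by
      exact_mod_cast hsum
    unfold Peak
    linarith
  refine ⟨h1, by omega, hpeak, le_csSup ⟨M, fun k hk => ?_⟩ hpeak⟩
  have hkM : (k : ℚ) ≤ (M : ℚ) := (le_Peak hτ k s).trans hk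
  exact_mod_cast hkM
end

section
/- Let s ≥ 0, τ ≥ 1, k ≥ 1, and M ≥ 1 be natural numbers, and suppose 2M < 2s(k+1) + τ(k+1) + τ + (k+1) - gcd(k+1, τ) (i.e., Peak(k+1, τ, s) > M). Then, over the reals, τ/k < (1 + 2/k) · A(τ, s)/M, where A(τ, s) := s·τ + τ(τ+1)/2. Equivalently, (k+2)(2s + τ + 1) > 2M. -/
/-!
The product `(k+2)(2s+τ+1)` exceeds twice the peak memory, even with the `gcd` term discarded, by
`2s + 1`; this is the integer inequality. The real inequality is equivalent to it, since
`(1 + 2/k) · A(τ,s)/M - τ/k = τ/(2kM) · ((k+2)(2s+τ+1) - 2M)`.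
-/

/-- Area-based packing efficiency of SPS: if `Peak (k+1, τ, s) > M`, i.e.
`2M < 2s(k+1) + τ(k+1) + τ + (k+1) − gcd(k+1, τ)`, then over the reals
`τ/k < (1 + 2/k) · A(τ,s)/M` where `A(τ,s) = s·τ + τ(τ+1)/2`;
equivalently `(k+2)(2s+τ+1) > 2M`. -/
theorem stmt_3 (s τ k M : ℕ) (hτ : 1 ≤ τ) (hk : 1 ≤ k) (hM : 1 ≤ M)
    (h : 2 * M < 2 * s * (k + 1) + τ * (k + 1) + τ + (k + 1) - Nat.gcd (k + 1) τ) :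
    (τ : ℝ) / k < (1 + 2 / (k : ℝ)) * (((s : ℝ) * τ + (τ : ℝ) * ((τ : ℝ) + 1) / 2) / M) ∧
    (k + 2) * (2 * s + τ + 1) > 2 * M := by
  have key : 2 * M < (k + 2) * (2 * s + τ + 1) := by
    calc 2 * M < 2 * s * (k + 1) + τ * (k + 1) + τ + (k + 1) := h.trans_le (Nat.sub_le _ _)
      _ ≤ (k + 2) * (2 * s + τ + 1) := by nlinarith
  refine ⟨?_, key⟩
  have keyR : (2 : ℝ) * M < (k + 2) * (2 * s + τ + 1) := by exact_mod_cast key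
  have hτ' : (0 : ℝ) < τ := by exact_mod_cast hτ
  have hk' : (0 : ℝ) < k := by exact_mod_cast hk
  have hM' : (0 : ℝ) < M := by exact_mod_cast hM
  -- The difference of the two sides is a positive multiple of the slack in `keyR`.
  rw [← sub_pos]
  have hdiff : (1 + 2 / (k : ℝ)) * (((s : ℝ) * τ + (τ : ℝ) * ((τ : ℝ) + 1) / 2) / M) - (τ : ℝ) / k
      = τ / (2 * k * M) * ((k + 2) * (2 * s + τ + 1) - 2 * M) := by
    field_simp
    ring
  rw [hdiff]
  exact mul_pos (by positivity) (sub_pos.mpr keyR)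
end

section
/- Let n ≥ 1 be a natural number, let M > 0 and A ≥ 0 be real numbers, let C : Fin n → ℕ assign a completion time to each job, and let m : ℕ → Fin n → ℝ≥0 assign a per-round memory usage to each job. Suppose that (i) for every round t, ∑_{i} m(t, i) ≤ M, and (ii) for every job i, ∑_{t < C(i)} m(t, i) ≥ A. Then the total flow time satisfies ∑_{i} C(i) ≥ (n(n+1)/2) · A/M. -/
open scoped NNReal

/-!
The last of any `k` jobs to complete, at time `c` say, leaves room for an area of at most `M * c`
up to that time, into which all `k` areas must fit; so `k * A ≤ M * c` (`card_mul_area_le`).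
Adding jobs one at a time in order of completion and summing over `k = 1, …, n` gives
`n (n + 1) / 2 * A ≤ M * ∑ i, C i`.
-/

lemma card_mul_area_le {n : ℕ} {M A : ℝ} {C : Fin n → ℕ} {m : ℕ → Fin n → ℝ≥0}
    (h1 : ∀ t : ℕ, (∑ i, (m t i : ℝ)) ≤ M)
    (h2 : ∀ i, A ≤ ∑ t ∈ Finset.range (C i), (m t i : ℝ))
    (s : Finset (Fin n)) (c : ℕ) (hc : ∀ i ∈ s, C i ≤ c) :
    (s.card : ℝ) * A ≤ M * c := by
  calc (s.card : ℝ) * A = ∑ _i ∈ s, A := by simp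
    _ ≤ ∑ i ∈ s, ∑ t ∈ Finset.range c, (m t i : ℝ) := by
        refine Finset.sum_le_sum fun i hi => (h2 i).trans ?_
        exact Finset.sum_le_sum_of_subset_of_nonneg (Finset.range_mono (hc i hi))
          fun t _ _ => (m t i).coe_nonneg
    _ = ∑ t ∈ Finset.range c, ∑ i ∈ s, (m t i : ℝ) := Finset.sum_comm
    _ ≤ ∑ _t ∈ Finset.range c, M := by
        refine Finset.sum_le_sum fun t _ => le_trans ?_ (h1 t)
        exact Finset.sum_le_sum_of_subset_of_nonneg (Finset.subset_univ s)
          fun i _ _ => (m t i).coe_nonneg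
    _ = M * c := by simp [mul_comm]

/-- Area-based lower bound on optimal flow time: if each round supplies at most `M`
total memory and each job consumes memory-time area at least `A` before completing,
then the total flow time of `n` jobs is at least `(n(n+1)/2)·A/M`. -/
theorem stmt_4 (n : ℕ) (hn : 1 ≤ n) (M A : ℝ) (hM : 0 < M) (hA : 0 ≤ A)
    (C : Fin n → ℕ) (m : ℕ → Fin n → ℝ≥0)
    (h1 : ∀ t : ℕ, (∑ i, (m t i : ℝ)) ≤ M)
    (h2 : ∀ i, A ≤ ∑ t ∈ Finset.range (C i), (m t i : ℝ)) :
    ((n : ℝ) * (n + 1) / 2) * A / M ≤ ∑ i, (C i : ℝ) := by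
  have key : ∀ s : Finset (Fin n),
      ((s.card : ℝ) * (s.card + 1) / 2) * A ≤ M * ∑ i ∈ s, (C i : ℝ) := by
    intro s
    -- `a` is a job completing no earlier than any job of `s`.
    induction s using Finset.induction_on_max_value C with
    | empty => simp
    | insert a s ha hmax ih =>
      have h := card_mul_area_le h1 h2 (insert a s) (C a) (by simpa using hmax)
      rw [Finset.card_insert_of_notMem ha] at h ⊢
      rw [Finset.sum_insert ha]
      push_cast at h ⊢
      linarith
  rw [div_le_iff₀ hM, mul_comm _ M]
  simpa using key Finset.univ
end

section
/- For all real numbers n ≥ 1 and k ≥ 1, min{1, (2k + 4)/(n + 1)} + ((n - 1)/(n + 1)) · (1 + 2/k) ≤ 2 + 1/k. -/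
/-!
The minimum is at most each of its arguments, and the better bound depends on whether
`n ≤ 2 * k + 3`. After clearing the positive denominator `k * (n + 1)`, the gap between the two
sides is `2 * k + 3 - n` for the first argument and `(n - (2 * k + 3)) * (k - 1)` for the second,
so in each range one of the two bounds suffices.
-/

/-- For all reals `n ≥ 1` and `k ≥ 1`:
`min {1, (2k+4)/(n+1)} + ((n−1)/(n+1))·(1 + 2/k) ≤ 2 + 1/k`. -/
theorem stmt_6 (n k : ℝ) (hn : 1 ≤ n) (hk : 1 ≤ k) :
    min 1 ((2 * k + 4) / (n + 1)) + ((n - 1) / (n + 1)) * (1 + 2 / k) ≤ 2 + 1 / k := by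
  have hk0 : 0 < k := by linarith
  have hn0 : 0 < n + 1 := by linarith
  -- The two arguments of the minimum agree at `n = 2 * k + 3`.
  rcases le_total n (2 * k + 3) with h | h
  · -- Bounding the minimum by `1`, the claim is equivalent to `n ≤ 2 * k + 3`.
    have key : 2 + 1 / k - (1 + ((n - 1) / (n + 1)) * (1 + 2 / k))
        = (2 * k + 3 - n) / (k * (n + 1)) := by
      field_simp
      ring
    have hnonneg : 0 ≤ (2 * k + 3 - n) / (k * (n + 1)) :=
      div_nonneg (by linarith) (by positivity)
    linarith [min_le_left 1 ((2 * k + 4) / (n + 1))]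
  · -- With the other bound, the gap carries the factor `k - 1`, so `1 ≤ k` is what is needed.
    have key : 2 + 1 / k - ((2 * k + 4) / (n + 1) + ((n - 1) / (n + 1)) * (1 + 2 / k))
        = ((n - (2 * k + 3)) * (k - 1)) / (k * (n + 1)) := by
      field_simp
      ring
    have hnonneg : 0 ≤ ((n - (2 * k + 3)) * (k - 1)) / (k * (n + 1)) :=
      div_nonneg (mul_nonneg (by linarith) (by linarith)) (by positivity)
    linarith [min_le_right 1 ((2 * k + 4) / (n + 1))]
end

section
/- For all natural numbers n ≥ 1 and k ≥ 1, n · ⌈n/k⌉ ≤ 2 · ∑_{u=1}^{n} ⌈u/k⌉. -/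
/-! The ceiling `⌈·/k⌉` is subadditive and monotone, so
`⌈n/k⌉ ≤ ⌈u/k⌉ + ⌈(n + 1 - u)/k⌉` for each `1 ≤ u ≤ n`. Summing over `u`, the two sums on the
right agree, by the reflection `u ↦ n + 1 - u` of the summation range. -/

theorem ceil_le_add_ceil (n k u v : ℕ) (hk : 1 ≤ k) (h : n ≤ u + v) :
    (n + k - 1) / k ≤ (u + k - 1) / k + (v + k - 1) / k := by
  have hu := Nat.lt_mul_div_succ (u + k - 1) hk
  have hv := Nat.lt_mul_div_succ (v + k - 1) hk
  rw [← Nat.lt_succ_iff, Nat.div_lt_iff_lt_mul hk, Nat.succ_eq_add_one]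
  generalize (u + k - 1) / k = a at *
  generalize (v + k - 1) / k = b at *
  have e : (a + b + 1) * k = k * (a + 1) + k * (b + 1) - k := by
    have : k * (a + 1) + k * (b + 1) = (a + b + 1) * k + k := by ring
    omega
  omega

/-- Ceiling lemma: for `n ≥ 1`, `k ≥ 1`:
`n · ⌈n/k⌉ ≤ 2 · ∑_{u=1}^{n} ⌈u/k⌉`, where `⌈a/k⌉ = (a + k − 1)/k`
in natural-number division. -/
theorem stmt_9 (n k : ℕ) (hn : 1 ≤ n) (hk : 1 ≤ k) :
    n * ((n + k - 1) / k) ≤ 2 * ∑ u ∈ Finset.Icc 1 n, (u + k - 1) / k := by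
  have hrefl : ∑ u ∈ Finset.Icc 1 n, (n + 1 - u + k - 1) / k
      = ∑ u ∈ Finset.Icc 1 n, (u + k - 1) / k := by
    refine Finset.sum_nbij' (fun u => n + 1 - u) (fun u => n + 1 - u) ?_ ?_ ?_ ?_ ?_ <;>
      intro u hu <;> simp only [Finset.mem_Icc] at * <;> omega
  calc n * ((n + k - 1) / k) = ∑ u ∈ Finset.Icc 1 n, (n + k - 1) / k := by simp
    _ ≤ ∑ u ∈ Finset.Icc 1 n, ((u + k - 1) / k + (n + 1 - u + k - 1) / k) :=
        Finset.sum_le_sum fun u _ => ceil_le_add_ceil n k u (n + 1 - u) hk (by omega)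
    _ = 2 * ∑ u ∈ Finset.Icc 1 n, (u + k - 1) / k := by
        rw [Finset.sum_add_distrib, hrefl, two_mul]
end

section
/- Let α > 1 and β ≥ 1 be real numbers and let p ≥ 0 be a natural number. Then (α - 1) · ∑_{q=0}^{p-1} ⌊β·α^q⌋ ≤ ⌊β·α^p⌋, where ⌊·⌋ denotes the floor of a real number. -/
/-- Geometric-sum bound for slice lengths: for real `α > 1`, `β ≥ 1`, and `p ∈ ℕ`,
`(α − 1) · ∑_{q=0}^{p-1} ⌊β·α^q⌋ ≤ ⌊β·α^p⌋`. -/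
theorem stmt_10 (α β : ℝ) (hα : 1 < α) (hβ : 1 ≤ β) (p : ℕ) :
    (α - 1) * ∑ q ∈ Finset.range p, (⌊β * α ^ q⌋ : ℝ) ≤ (⌊β * α ^ p⌋ : ℝ) := by
  -- Dropping the floors on the left makes the sum geometric, with value `β * α ^ p - β`;
  -- since `β ≥ 1`, this is below `⌊β * α ^ p⌋`.
  have h : ∑ q ∈ Finset.range p, (⌊β * α ^ q⌋ : ℝ) ≤ β * ∑ q ∈ Finset.range p, α ^ q := by
    rw [Finset.mul_sum]
    exact Finset.sum_le_sum fun q _ => Int.floor_le _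
  have h1 := mul_le_mul_of_nonneg_left h (sub_nonneg.2 hα.le)
  have h2 : (α - 1) * (β * ∑ q ∈ Finset.range p, α ^ q) = β * α ^ p - β := by
    linear_combination β * mul_geom_sum α p
  have h3 := Int.lt_floor_add_one (β * α ^ p)
  linarith
end

section
/- Let α > 1 be a real number, let s ≥ 0, τ ≥ 1, k ≥ 1, and M ≥ 1 be natural numbers with s < M, let y > 0 be a real number, and suppose: (i) τ ≤ α·y, (ii) y ≤ (M - s)/α, and (iii) 2M < 2s(k+1) + τ(k+2) + k. Then, over the reals, τ/k ≤ α² · (1 + 2/k) · (s·y + y(y+1)/2)/M. -/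
/-!
With the class area `A = y (2 s + y + 1) / 2`, the claim is `2 τ M ≤ 2 α² (k + 2) A`. It is the
product of `τ ≤ α y` with `2 M ≤ α (k + 2) (2 s + y + 1)`; the latter follows from the maximality
of `k`, since `τ ≤ α y`, `1 ≤ α` and `2 s (k + 1) + k ≤ (k + 2) (2 s + 1)`.
-/

/-- Area-based packing efficiency of GBA (per-class):
if `τ ≤ α·y`, `y ≤ (M − s)/α`, and `2M < 2s(k+1) + τ(k+2) + k`, then
`τ/k ≤ α² · (1 + 2/k) · (s·y + y(y+1)/2)/M` over the reals. -/
theorem stmt_11 (α : ℝ) (hα : 1 < α) (s τ k M : ℕ) (hτ : 1 ≤ τ) (hk : 1 ≤ k)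
    (hM : 1 ≤ M) (hsM : s < M) (y : ℝ) (hy : 0 < y)
    (h1 : (τ : ℝ) ≤ α * y) (h2 : y ≤ ((M : ℝ) - (s : ℝ)) / α)
    (h3 : 2 * M < 2 * s * (k + 1) + τ * (k + 2) + k) :
    (τ : ℝ) / k ≤ α ^ 2 * (1 + 2 / (k : ℝ)) * (((s : ℝ) * y + y * (y + 1) / 2) / M) := by
  have hk' : (0 : ℝ) < k := by exact_mod_cast hk
  have hM' : (0 : ℝ) < M := by exact_mod_cast hM
  have hs' : (0 : ℝ) ≤ s := s.cast_nonneg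
  have h3' : (2 * M : ℝ) < 2 * s * (k + 1) + τ * (k + 2) + k := by exact_mod_cast h3
  have key : (2 * M : ℝ) ≤ α * ((k + 2) * (2 * s + y + 1)) := by
    have e1 : (τ : ℝ) * (k + 2) ≤ α * y * (k + 2) := by gcongr
    have e2 : 1 * (((k : ℝ) + 2) * (2 * s + 1)) ≤ α * ((k + 2) * (2 * s + 1)) := by gcongr
    linarith
  have prod : (τ : ℝ) * (2 * M) ≤ α * y * (α * ((k + 2) * (2 * s + y + 1))) := by gcongr
  have rhs : α ^ 2 * (1 + 2 / (k : ℝ)) * (((s : ℝ) * y + y * (y + 1) / 2) / M)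
      = (α * y * (α * ((k + 2) * (2 * s + y + 1))) / (2 * M)) / k := by
    field_simp
    ring
  rw [rhs]
  gcongr
  rwa [le_div_iff₀ (by positivity)]
end

section
/- Let α > 1, k ≥ 1, M ≥ 1, and ρ ≥ 0 be real numbers. Then (α/k) · ((k + 2) + k·ρ + k/M) / (2ρ + (1 - ρ)/α + 1/M) ≤ α² · (1 + 2/k). -/
/-!
Multiplying numerator and denominator by `α` turns the denominator into
`1 + (2α - 1)ρ + α/M`, which is positive. Clearing it, the claim becomes
`(k + 2) + kρ + k/M ≤ (k + 2)(1 + (2α - 1)ρ + α/M)`, which holds coefficientwise in `ρ` and `1/M`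
because `α > 1`.
-/

/-- For all reals `α > 1`, `k ≥ 1`, `M ≥ 1`, `ρ ≥ 0`:
`(α/k)·((k+2) + kρ + k/M)/(2ρ + (1−ρ)/α + 1/M) ≤ α²·(1 + 2/k)`. -/
theorem stmt_12 (α k M ρ : ℝ) (hα : 1 < α) (hk : 1 ≤ k) (hM : 1 ≤ M) (hρ : 0 ≤ ρ) :
    (α / k) * ((k + 2) + k * ρ + k / M) / (2 * ρ + (1 - ρ) / α + 1 / M) ≤
      α ^ 2 * (1 + 2 / k) := by
  have hk0 : 0 < k := by linarith
  have hα0 : 0 < α := by linarith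
  have hm : 0 < 1 / M := by positivity
  rw [div_eq_mul_one_div k M]
  generalize 1 / M = m at hm ⊢
  have hD : 2 * ρ + (1 - ρ) / α + m = (1 + (2 * α - 1) * ρ + α * m) / α := by
    field_simp
    ring
  have hN : 0 < 1 + (2 * α - 1) * ρ + α * m := by
    have : 0 ≤ (2 * α - 1) * ρ := mul_nonneg (by linarith) hρ
    positivity
  rw [hD, div_le_iff₀ (div_pos hN hα0)]
  -- After cancelling `α / k`, the bound compares the coefficients of `1`, `ρ` and `m = 1 / M`.
  have key : (k + 2) + k * ρ + k * m ≤ (k + 2) * (1 + (2 * α - 1) * ρ + α * m) := by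
    have h1 : k * ρ ≤ (k + 2) * (2 * α - 1) * ρ :=
      mul_le_mul_of_nonneg_right (by nlinarith) hρ
    have h2 : k * m ≤ (k + 2) * α * m :=
      mul_le_mul_of_nonneg_right (by nlinarith) hm.le
    linarith
  calc α / k * ((k + 2) + k * ρ + k * m)
      ≤ α / k * ((k + 2) * (1 + (2 * α - 1) * ρ + α * m)) := by gcongr
    _ = α ^ 2 * (1 + 2 / k) * ((1 + (2 * α - 1) * ρ + α * m) / α) := by
      field_simp
end

section
/- Let P ≥ 0 be a natural number and, for each p ∈ {0, 1, …, P}, let n_p ≥ 0, τ_p ≥ 1, and k_p ≥ 1 be natural numbers. Define N_{>p} := ∑_{q = p+1}^{P} n_q, Q_p := n_p·τ_p + ∑_{i=0}^{n_p − 1} ⌊i·τ_p/k_p⌋, S_p := ∑_{q < p} (⌊n_q·τ_q/k_q⌋ + τ_q), and Δ_p := ⌈N_{>p}·τ_p/k_p⌉. Then ∑_{p=0}^{P} n_p·Δ_p ≤ ∑_{p=0}^{P} n_p·S_p + ∑_{p=0}^{P} Q_p. -/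
/-!
Exchanging the order of summation turns `∑ n_p · S_p` into
`∑ N_{>p} · (⌊n_p τ_p / k_p⌋ + τ_p)` (`sum_mul_Spre`), after which the inequality holds phase by
phase. Indeed, up to rounding, both `n_p · ⌈N_{>p} τ_p / k_p⌉` and `N_{>p} · ⌊n_p τ_p / k_p⌋` equal
`n_p N_{>p} τ_p / k_p`. The rounding errors are at most `n_p` and `N_{>p}`, and as `τ_p ≥ 1` they
are absorbed by the term `n_p τ_p` of `Q_p` and by `N_{>p} τ_p` (`mul_ceil_le`).
-/

/-- `N_{>p}`: the number of jobs in classes strictly greater than `p`. -/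
def Ngt (P : ℕ) (n : ℕ → ℕ) (p : ℕ) : ℕ := ∑ q ∈ Finset.Icc (p + 1) P, n q

/-- Ladder term `Q_p = n_p·τ_p + ∑_{i=0}^{n_p−1} ⌊i·τ_p/k_p⌋`. -/
def Qlad (n τ k : ℕ → ℕ) (p : ℕ) : ℕ :=
  n p * τ p + ∑ i ∈ Finset.range (n p), i * τ p / k p

/-- Class-prefix term `S_p = ∑_{q<p} (⌊n_q·τ_q/k_q⌋ + τ_q)`. -/
def Spre (n τ k : ℕ → ℕ) (p : ℕ) : ℕ :=
  ∑ q ∈ Finset.range p, (n q * τ q / k q + τ q)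

/-- Phase spillover cost `Δ_p = ⌈N_{>p}·τ_p/k_p⌉`, with `⌈a/b⌉ = (a + b − 1)/b`
in natural-number division. -/
def Dspill (P : ℕ) (n τ k : ℕ → ℕ) (p : ℕ) : ℕ :=
  (Ngt P n p * τ p + k p - 1) / k p

theorem mul_ceil_le (n N t k : ℕ) (ht : 1 ≤ t) (hk : 1 ≤ k) :
    n * ((N * t + k - 1) / k) ≤ N * (n * t / k + t) + n * t := by
  have hA : (N * t + k - 1) / k * k ≤ N * t + k :=
    (Nat.div_mul_le_self _ _).trans (Nat.sub_le _ _)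
  have hB : n * t ≤ (n * t / k + 1) * k := by
    have := Nat.lt_div_mul_add (a := n * t) (b := k) hk
    rw [add_mul, one_mul]
    exact this.le
  generalize (N * t + k - 1) / k = A at *
  generalize n * t / k = B at *
  refine Nat.le_of_mul_le_mul_right (c := k) ?_ hk
  calc n * A * k = n * (A * k) := by ring
    _ ≤ n * (N * t + k) := by gcongr
    _ = N * (n * t) + n * 1 * k := by ring
    _ ≤ N * ((B + 1) * k) + n * t * k := by gcongr
    _ = (N * (B + 1) + n * t) * k := by ring
    _ ≤ (N * (B + t) + n * t) * k := by gcongr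

theorem sum_mul_Spre (P : ℕ) (n τ k : ℕ → ℕ) :
    ∑ p ∈ Finset.range (P + 1), n p * Spre n τ k p =
      ∑ p ∈ Finset.range (P + 1), Ngt P n p * (n p * τ p / k p + τ p) := by
  simp only [Spre, Ngt, Finset.mul_sum, Finset.sum_mul]
  refine Finset.sum_comm' fun p q => ?_
  simp only [Finset.mem_range, Finset.mem_Icc]
  omega

/-- Upper bound on spillover cost of GSA:
`∑_p n_p·Δ_p ≤ ∑_p n_p·S_p + ∑_p Q_p`. -/
theorem stmt_13 (P : ℕ) (n τ k : ℕ → ℕ)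
    (hτ : ∀ p ≤ P, 1 ≤ τ p) (hk : ∀ p ≤ P, 1 ≤ k p) :
    ∑ p ∈ Finset.range (P + 1), n p * Dspill P n τ k p ≤
      ∑ p ∈ Finset.range (P + 1), n p * Spre n τ k p +
      ∑ p ∈ Finset.range (P + 1), Qlad n τ k p := by
  rw [sum_mul_Spre, ← Finset.sum_add_distrib]
  refine Finset.sum_le_sum fun p hp => ?_
  have hpP : p ≤ P := Finset.mem_range_succ_iff.mp hp
  refine (mul_ceil_le (n p) (Ngt P n p) (τ p) (k p) (hτ p hpP) (hk p hpP)).trans ?_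
  exact Nat.add_le_add_left (Nat.le_add_right _ _) _
end

section
/- Let P ≥ 0 be a natural number, let α > 1 be a real number, and for each p ∈ {0, 1, …, P} let n_p ≥ 0, τ_p ≥ 1, and k_p ≥ 1 be natural numbers. Assume: (i) k is nonincreasing, i.e., k_q ≥ k_t whenever q ≤ t; and (ii) for every p, (α − 1)·∑_{q < p} τ_q ≤ τ_p. Define N_{>p} := ∑_{q = p+1}^{P} n_q, N_{≥p} := n_p + N_{>p}, Q_p := n_p·τ_p + ∑_{i=0}^{n_p − 1} ⌊i·τ_p/k_p⌋, S_p := ∑_{q < p} (⌊n_q·τ_q/k_q⌋ + τ_q), and T_p := ∑_{q < p} (⌊N_{≥q}·τ_q/k_q⌋ + τ_q). Then ∑_{p=0}^{P} n_p·T_p ≤ (1 + 2/(α − 1))·∑_{p=0}^{P} n_p·S_p + (2/(α − 1))·∑_{p=0}^{P} Q_p. -/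
/-!
Write `c = 1 / (α - 1)`, `w q = τ q / k q` and `N q = ∑_{r > q} n r`. Dropping floors costs at most
one per phase, so `⌊N_{≥q} τ q / k q⌋ ≤ ⌊n q τ q / k q⌋ + 1 + N q * w q`, and the excess of
`∑ n p * T p` over `∑ n p * S p` is at most `∑ n p * p + ∑_p n p * ∑_{q<p} N q * w q`.

* The first sum is at most `c * ∑ n p * τ p`, because `p ≤ ∑_{q<p} τ q ≤ c * τ p`.
* The second sum is, after exchanging summations (`sum_tail_eq`), equal to
  `∑ n p ^ 2 * W p + 2 * ∑_p n p * ∑_{r<p} n r * W r` with `W p = ∑_{q<p} w q`, and `W p ≤ c * w p`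
  by the geometric bound and the monotonicity of `k`.

The proof ends by comparing with `S p ≥ ∑_{r<p} n r * w r` and with the ladder bound
`2 * Q p ≥ n p ^ 2 * w p + n p * τ p` (`ladder_bound`). The latter needs some care with floors:
for `τ ≥ 2` it holds term by term, while for `τ = 1` it only holds after summation.
-/

/-- `N_{≥p}`: the number of jobs in classes greater than or equal to `p`. -/
def Nge (P : ℕ) (n : ℕ → ℕ) (p : ℕ) : ℕ := ∑ q ∈ Finset.Icc p P, n q

/-- Phase-prefix cost `T_p = ∑_{q<p} (⌊N_{≥q}·τ_q/k_q⌋ + τ_q)`. -/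
def Tpre (P : ℕ) (n τ k : ℕ → ℕ) (p : ℕ) : ℕ :=
  ∑ q ∈ Finset.range p, (Nge P n q * τ q / k q + τ q)

/-- Closed form of the ladder sum for unit slices: the defect from `n ^ 2` is `r * (k - r)`,
with `r = n % k`. -/
lemma sum_div_closed (k : ℕ) (hk : 1 ≤ k) (n : ℕ) :
    (k : ℤ) * (n + 2 * ∑ i ∈ Finset.range n, ((i / k : ℕ) : ℤ)) =
      (n : ℤ) ^ 2 + ((n % k : ℕ) : ℤ) * (k - ((n % k : ℕ) : ℤ)) := by
  induction n with
  | zero => simp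
  | succ n ih =>
    rw [Finset.sum_range_succ]
    have hdm : (k : ℤ) * ((n / k : ℕ) : ℤ) + ((n % k : ℕ) : ℤ) = n := by
      exact_mod_cast Nat.div_add_mod n k
    have hlt : n % k < k := Nat.mod_lt _ hk
    by_cases h : n % k + 1 = k
    · have h1 : (n + 1) % k = 0 := by
        rw [← Nat.mod_add_mod, h, Nat.mod_self]
      have h' : ((n % k : ℕ) : ℤ) = k - 1 := by omega
      rw [h1]
      rw [h'] at ih hdm
      push_cast at *
      linear_combination ih + 2 * hdm
    · have h1 : (n + 1) % k = n % k + 1 := by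
        rw [← Nat.mod_add_mod, Nat.mod_eq_of_lt (by omega)]
      rw [h1]
      push_cast at *
      linear_combination ih + 2 * hdm

lemma cast_div_gt (a k : ℕ) (hk : 1 ≤ k) :
    (a : ℝ) / k - (1 - 1 / k) ≤ ((a / k : ℕ) : ℝ) := by
  have hk' : (0 : ℝ) < k := by exact_mod_cast hk
  have h : a + 1 ≤ k * (a / k) + k := by
    have := Nat.div_add_mod a k
    have := Nat.mod_lt a hk
    omega
  have h' : (a : ℝ) + 1 ≤ k * ((a / k : ℕ) : ℝ) + k := by exact_mod_cast h
  have e : (a : ℝ) / k - (1 - 1 / k) = (a + 1 - k) / k := by field_simp; ring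
  rw [e, div_le_iff₀ hk']
  linarith

/-- The ladder sum dominates its continuous counterpart: `n² τ / k ≤ n τ + 2 ∑_{i<n} ⌊i τ / k⌋`. -/
lemma ladder_bound (n τ k : ℕ) (hτ : 1 ≤ τ) (hk : 1 ≤ k) :
    (n : ℝ) ^ 2 * (τ / k) ≤ n * τ + 2 * ∑ i ∈ Finset.range n, ((i * τ / k : ℕ) : ℝ) := by
  have hk' : (1 : ℝ) ≤ k := by exact_mod_cast hk
  rcases hτ.eq_or_lt with rfl | hτ2
  · have h := sum_div_closed k hk n
    have hlt : n % k < k := Nat.mod_lt _ hk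
    have hr : (0 : ℤ) ≤ ((n % k : ℕ) : ℤ) * (k - ((n % k : ℕ) : ℤ)) :=
      mul_nonneg (by positivity) (by omega)
    have h2 : (n : ℤ) ^ 2 ≤ k * (n + 2 * ∑ i ∈ Finset.range n, ((i / k : ℕ) : ℤ)) := by linarith
    have h3 : (n : ℝ) ^ 2 ≤ k * (n + 2 * ∑ i ∈ Finset.range n, ((i / k : ℕ) : ℝ)) := by
      exact_mod_cast h2
    simp only [mul_one, Nat.cast_one]
    rw [mul_one_div, div_le_iff₀ (by linarith)]
    linarith
  · have hτ' : (2 : ℝ) ≤ τ := by exact_mod_cast hτ2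
    have hi : (1 : ℝ) / k ≤ 1 := by rw [div_le_one (by linarith)]; exact hk'
    induction n with
    | zero => simp
    | succ n ih =>
      rw [Finset.sum_range_succ]
      have h := cast_div_gt (n * τ) k hk
      have e : ((n * τ : ℕ) : ℝ) / k = n * (τ / k) := by push_cast; ring
      rw [e] at h
      have e2 : (τ : ℝ) / k = τ * (1 / k) := by ring
      -- the increment needs `τ / k ≤ τ - 2 (1 - 1 / k)`, which uses `τ ≥ 2`
      have h4 : 0 ≤ ((τ : ℝ) - 2) * (1 - 1 / k) := mul_nonneg (by linarith) (by linarith)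
      push_cast at *
      nlinarith

lemma sum_tail_swap (a w : ℕ → ℝ) (m : ℕ) :
    ∑ q ∈ Finset.range m, (∑ r ∈ Finset.Ico (q + 1) m, a r) * w q =
      ∑ r ∈ Finset.range m, a r * ∑ q ∈ Finset.range r, w q := by
  induction m with
  | zero => simp
  | succ m ih =>
    rw [Finset.sum_range_succ, Finset.sum_range_succ (fun r => a r * _), ← ih]
    simp only [Finset.Ico_self, Finset.sum_empty, zero_mul, add_zero]
    rw [Finset.mul_sum, ← Finset.sum_add_distrib]
    refine Finset.sum_congr rfl fun q hq => ?_
    rw [Finset.sum_Ico_succ_top (by have := Finset.mem_range.1 hq; omega)]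
    ring

/-- Both sides equal `∑_q w q * (∑_{r>q} a r) ^ 2`; on the right the square is expanded and sorted
by the larger index. -/
lemma sum_tail_eq (a w : ℕ → ℝ) (m : ℕ) :
    ∑ p ∈ Finset.range m, a p * ∑ q ∈ Finset.range p, (∑ r ∈ Finset.Ico (q + 1) m, a r) * w q =
      ∑ p ∈ Finset.range m, (a p ^ 2 * ∑ q ∈ Finset.range p, w q +
        2 * (a p * ∑ r ∈ Finset.range p, a r * ∑ q ∈ Finset.range r, w q)) := by
  induction m with
  | zero => simp
  | succ m ih =>
    have key : ∀ p ∈ Finset.range (m + 1),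
        a p * ∑ q ∈ Finset.range p, (∑ r ∈ Finset.Ico (q + 1) (m + 1), a r) * w q =
        a p * ∑ q ∈ Finset.range p, (∑ r ∈ Finset.Ico (q + 1) m, a r) * w q +
          a m * (a p * ∑ q ∈ Finset.range p, w q) := by
      intro p hp
      have : ∑ q ∈ Finset.range p, (∑ r ∈ Finset.Ico (q + 1) (m + 1), a r) * w q =
          ∑ q ∈ Finset.range p, (∑ r ∈ Finset.Ico (q + 1) m, a r) * w q +
            a m * ∑ q ∈ Finset.range p, w q := by
        rw [Finset.mul_sum, ← Finset.sum_add_distrib]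
        refine Finset.sum_congr rfl fun q hq => ?_
        rw [Finset.sum_Ico_succ_top
          (by have := Finset.mem_range.1 hq; have := Finset.mem_range.1 hp; omega)]
        ring
      rw [this]; ring
    rw [Finset.sum_congr rfl key, Finset.sum_add_distrib, ← Finset.mul_sum,
      Finset.sum_range_succ, ih, sum_tail_swap, Finset.sum_range_succ, Finset.sum_range_succ]
    ring

/-- Upper bound on phase-prefix cost of GSA:
`∑_p n_p·T_p ≤ (1 + 2/(α−1))·∑_p n_p·S_p + (2/(α−1))·∑_p Q_p`. -/
theorem stmt_14 (P : ℕ) (α : ℝ) (hα : 1 < α) (n τ k : ℕ → ℕ)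
    (hτ : ∀ p ≤ P, 1 ≤ τ p) (hk : ∀ p ≤ P, 1 ≤ k p)
    (hmono : ∀ q t, q ≤ t → t ≤ P → k t ≤ k q)
    (hgeo : ∀ p ≤ P, (α - 1) * ∑ q ∈ Finset.range p, (τ q : ℝ) ≤ (τ p : ℝ)) :
    (∑ p ∈ Finset.range (P + 1), (n p : ℝ) * (Tpre P n τ k p : ℝ)) ≤
      (1 + 2 / (α - 1)) * ∑ p ∈ Finset.range (P + 1), (n p : ℝ) * (Spre n τ k p : ℝ) +
      (2 / (α - 1)) * ∑ p ∈ Finset.range (P + 1), (Qlad n τ k p : ℝ) := by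
  obtain ⟨c, hc⟩ : ∃ c : ℝ, c = 1 / (α - 1) := ⟨_, rfl⟩
  have hα' : 0 < α - 1 := by linarith
  have hc0 : 0 < c := by rw [hc]; positivity
  have hc2 : 2 / (α - 1) = 2 * c := by rw [hc]; ring
  rw [hc2]
  have hgeo' : ∀ p ≤ P, ∑ q ∈ Finset.range p, (τ q : ℝ) ≤ c * τ p := by
    intro p hp
    rw [hc, one_div, ← div_eq_inv_mul, le_div_iff₀ hα', mul_comm]
    exact hgeo p hp
  let a : ℕ → ℝ := fun p => n p
  let w : ℕ → ℝ := fun q => (τ q : ℝ) / k q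
  have hW : ∀ p ≤ P, ∑ q ∈ Finset.range p, w q ≤ c * w p := by
    intro p hp
    have hkp : (0 : ℝ) < k p := by exact_mod_cast hk p hp
    calc ∑ q ∈ Finset.range p, w q ≤ ∑ q ∈ Finset.range p, (τ q : ℝ) / k p := by
          refine Finset.sum_le_sum fun q hq => ?_
          have hq' := Finset.mem_range.1 hq
          have : (k p : ℝ) ≤ k q := by exact_mod_cast hmono q p hq'.le hp
          exact div_le_div_of_nonneg_left (by positivity) hkp this
      _ = (∑ q ∈ Finset.range p, (τ q : ℝ)) / k p := by rw [Finset.sum_div]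
      _ ≤ c * τ p / k p := by gcongr; exact hgeo' p hp
      _ = c * w p := by simp only [w]; ring
  have hT : ∀ p ≤ P, (Tpre P n τ k p : ℝ) ≤ Spre n τ k p + c * τ p +
      ∑ q ∈ Finset.range p, (∑ r ∈ Finset.Ico (q + 1) (P + 1), a r) * w q := by
    intro p hp
    refine le_trans ?_ (add_le_add_left (add_le_add_right (hgeo' p hp) _) _)
    simp only [Tpre, Spre]
    push_cast
    rw [← Finset.sum_add_distrib, ← Finset.sum_add_distrib]
    refine Finset.sum_le_sum fun q hq => ?_
    have hq' : q ≤ P := by have := Finset.mem_range.1 hq; omega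
    have hN : (Nge P n q : ℝ) = n q + ∑ r ∈ Finset.Ico (q + 1) (P + 1), a r := by
      have : Finset.Icc q P = Finset.Ico q (P + 1) := by ext; simp
      simp only [Nge, a]
      rw [this, Finset.sum_eq_sum_Ico_succ_bot (by omega)]
      push_cast
      rfl
    have h1 : ((Nge P n q * τ q / k q : ℕ) : ℝ) ≤ (Nge P n q : ℝ) * w q := by
      refine Nat.cast_div_le.trans (le_of_eq ?_)
      push_cast
      simp only [w]; ring
    have h2 := cast_div_gt (n q * τ q) (k q) (hk q hq')
    have e : ((n q * τ q : ℕ) : ℝ) / k q = n q * w q := by push_cast; simp only [w]; ring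
    have h3 : (0 : ℝ) ≤ 1 / k q := by positivity
    have h4 : (1 : ℝ) ≤ τ q := by exact_mod_cast hτ q hq'
    rw [hN] at h1
    rw [e] at h2
    linarith
  have hS : ∀ p ≤ P, ∑ r ∈ Finset.range p, a r * w r ≤ Spre n τ k p := by
    intro p hp
    simp only [Spre]
    push_cast
    refine Finset.sum_le_sum fun q hq => ?_
    have hq' : q ≤ P := by have := Finset.mem_range.1 hq; omega
    have h2 := cast_div_gt (n q * τ q) (k q) (hk q hq')
    have e : ((n q * τ q : ℕ) : ℝ) / k q = a q * w q := by push_cast; simp only [w, a]; ring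
    have h3 : (0 : ℝ) ≤ 1 / k q := by positivity
    have h4 : (1 : ℝ) ≤ τ q := by exact_mod_cast hτ q hq'
    rw [e] at h2
    linarith
  have hQ : ∀ p ≤ P, a p ^ 2 * w p + a p * τ p ≤ 2 * Qlad n τ k p := by
    intro p hp
    have := ladder_bound (n p) (τ p) (k p) (hτ p hp) (hk p hp)
    simp only [Qlad, a, w]
    push_cast
    linarith
  calc ∑ p ∈ Finset.range (P + 1), (n p : ℝ) * (Tpre P n τ k p : ℝ)
      ≤ ∑ p ∈ Finset.range (P + 1), (a p * (Spre n τ k p + c * τ p) +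
        a p * ∑ q ∈ Finset.range p, (∑ r ∈ Finset.Ico (q + 1) (P + 1), a r) * w q) := by
        refine Finset.sum_le_sum fun p hp => ?_
        rw [← mul_add]
        exact mul_le_mul_of_nonneg_left
          (hT p (Nat.lt_succ_iff.1 (Finset.mem_range.1 hp))) (Nat.cast_nonneg _)
    _ = ∑ p ∈ Finset.range (P + 1), (a p * (Spre n τ k p + c * τ p) +
        (a p ^ 2 * ∑ q ∈ Finset.range p, w q +
        2 * (a p * ∑ r ∈ Finset.range p, a r * ∑ q ∈ Finset.range r, w q))) := by
        rw [Finset.sum_add_distrib, sum_tail_eq, ← Finset.sum_add_distrib]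
    _ ≤ ∑ p ∈ Finset.range (P + 1), ((1 + 2 * c) * ((n p : ℝ) * (Spre n τ k p : ℝ)) +
        2 * c * (Qlad n τ k p : ℝ)) := by
        refine Finset.sum_le_sum fun p hp => ?_
        have hp' : p ≤ P := Nat.lt_succ_iff.1 (Finset.mem_range.1 hp)
        have ha : ∀ q, 0 ≤ a q := fun q => Nat.cast_nonneg _
        have h1 : a p ^ 2 * ∑ q ∈ Finset.range p, w q ≤ a p ^ 2 * (c * w p) :=
          mul_le_mul_of_nonneg_left (hW p hp') (sq_nonneg _)
        have h2 : ∑ r ∈ Finset.range p, a r * ∑ q ∈ Finset.range r, w q ≤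
            c * (Spre n τ k p : ℝ) := by
          refine le_trans ?_ (mul_le_mul_of_nonneg_left (hS p hp') hc0.le)
          rw [Finset.mul_sum]
          refine Finset.sum_le_sum fun r hr => ?_
          have hr' : r ≤ P := by have := Finset.mem_range.1 hr; omega
          have := mul_le_mul_of_nonneg_left (hW r hr') (ha r)
          linarith
        have h3 := mul_le_mul_of_nonneg_left h2 (ha p)
        have h4 := mul_le_mul_of_nonneg_left (hQ p hp') hc0.le
        change _ ≤ (1 + 2 * c) * (a p * _) + _
        linarith
    _ = _ := by rw [Finset.sum_add_distrib, Finset.mul_sum, Finset.mul_sum]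
end

section
/- For every real number α > 1, (2 + 2/(α − 1)) · (3α² + α + α/(α − 1)) ≥ (92 + 26·√13)/3, with the minimum attained at α = (7 + √13)/6. -/
/-!
With `b = α - 1` the expression equals `2 (b+1)³ (3b+1) / b²`, whose critical points on `b > 0`
solve `3b² - b - 1 = 0`, so that the minimizer is `b₀ = (1 + √13)/6`. Since `b₀` is a double root
of the numerator of the difference with the minimal value `m = (92 + 26√13)/3`,
`2 (b+1)³ (3b+1) - m b² = (b - b₀)² (6b² + (22 + 2√13) b + (7 - √13))`,
and the second factor is positive for `b > 0`. This factorization gives the bound, and the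
value at `b₀` too.
-/

/-- The gap between the expression and its minimal value, factored with `s = √13`. -/
lemma gap_eq (s α : ℝ) (hs : s ^ 2 = 13) (hα : α - 1 ≠ 0) :
    (2 + 2 / (α - 1)) * (3 * α ^ 2 + α + α / (α - 1)) - (92 + 26 * s) / 3 =
      (α - (7 + s) / 6) ^ 2 *
        (6 * (α - 1) ^ 2 + (22 + 2 * s) * (α - 1) + (7 - s)) / (α - 1) ^ 2 := by
  obtain ⟨b, rfl⟩ : ∃ b, α = b + 1 := ⟨α - 1, by ring⟩
  simp only [add_sub_cancel_right] at hα ⊢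
  have key : 2 * (b + 1) ^ 3 * (3 * b + 1) - (92 + 26 * s) / 3 * b ^ 2 =
      (b + 1 - (7 + s) / 6) ^ 2 * (6 * b ^ 2 + (22 + 2 * s) * b + (7 - s)) := by
    have h3 : s ^ 3 = 13 * s := by rw [pow_succ, hs]
    ring_nf
    rw [h3, hs]
    ring
  rw [← key]
  field_simp
  ring


/-- For every real `α > 1`,
`(2 + 2/(α−1))·(3α² + α + α/(α−1)) ≥ (92 + 26·√13)/3`,
with the minimum attained at `α = (7 + √13)/6`. -/
theorem stmt_18 :
    (∀ α : ℝ, 1 < α →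
      (2 + 2 / (α - 1)) * (3 * α ^ 2 + α + α / (α - 1)) ≥ (92 + 26 * Real.sqrt 13) / 3) ∧
    (2 + 2 / ((7 + Real.sqrt 13) / 6 - 1)) *
        (3 * ((7 + Real.sqrt 13) / 6) ^ 2 + (7 + Real.sqrt 13) / 6 +
          ((7 + Real.sqrt 13) / 6) / ((7 + Real.sqrt 13) / 6 - 1)) =
      (92 + 26 * Real.sqrt 13) / 3 := by
  have hs : Real.sqrt 13 ^ 2 = 13 := Real.sq_sqrt (by norm_num)
  have h0 : 0 ≤ Real.sqrt 13 := Real.sqrt_nonneg 13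
  have h7 : Real.sqrt 13 < 7 := by nlinarith
  refine ⟨fun α hα => ?_, ?_⟩
  · have hb : 0 < α - 1 := sub_pos.mpr hα
    have h7' : 0 < 7 - Real.sqrt 13 := sub_pos.mpr h7
    apply sub_nonneg.mp
    rw [gap_eq _ α hs hb.ne']
    positivity
  · have hb : (7 + Real.sqrt 13) / 6 - 1 ≠ 0 := by
      have : 0 < (7 + Real.sqrt 13) / 6 - 1 := by linarith
      exact this.ne'
    apply sub_eq_zero.mp
    rw [gap_eq _ _ hs hb]
    simp
end

section
/- For every real number α > 1, (2 + 2/(α − 1)) · (α² + α + α/(α − 1)) ≥ 32, with equality if and only if α = 2. -/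
/-- For every real `α > 1`, `(2 + 2/(α−1))·(α² + α + α/(α−1)) ≥ 32`,
with equality iff `α = 2`. -/
theorem stmt_19 (α : ℝ) (hα : 1 < α) :
    (2 + 2 / (α - 1)) * (α ^ 2 + α + α / (α - 1)) ≥ 32 ∧
    ((2 + 2 / (α - 1)) * (α ^ 2 + α + α / (α - 1)) = 32 ↔ α = 2) := by
  have h : 0 < α - 1 := sub_pos.mpr hα
  -- The product is `2 * α ^ 4 / (α - 1) ^ 2`, so its excess over 32 factors as a difference of
  -- squares, one factor being `α ^ 2 - 4 * (α - 1) = (α - 2) ^ 2`.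
  have key : (2 + 2 / (α - 1)) * (α ^ 2 + α + α / (α - 1)) =
      32 + (α - 2) ^ 2 * (2 * (α ^ 2 + 4 * (α - 1)) / (α - 1) ^ 2) := by
    have h0 : α - 1 ≠ 0 := h.ne'
    field_simp
    ring
  have hc : 0 < 2 * (α ^ 2 + 4 * (α - 1)) / (α - 1) ^ 2 := by positivity
  rw [key]
  refine ⟨le_add_of_nonneg_right (by positivity), ?_⟩
  rw [add_eq_left, mul_eq_zero, or_iff_left hc.ne', sq_eq_zero_iff, sub_eq_zero]
end
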